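/- Let q, m ∈ ℕ, let I ⊆ ℝ, let μ : I → ℝ and let φ₁, …, φ_q : I → ℝ be functions, let λ₁ ≥ λ₂ ≥ ⋯ ≥ λ_q > 0, and let ξ = (ξ₁, …, ξ_q) be a random vector in ℝ^q whose characteristic function satisfies E[exp(i⟨u, ξ⟩)] = φ(∑_{j=1}^q λ_j u_j²) for all u ∈ ℝ^q, for some function φ : [0,∞) → ℂ. Define the stochastic process X(t) = μ(t) + ∑_{j=1}^q ξ_j φ_j(t) and the kernel γ(s,t) = ∑_{j=1}^q λ_j φ_j(s) φ_j(t). Then for any points t₁, …, t_m ∈ I, the random vector X_m = (X(t₁), …, X(t_m)) has characteristic function E[exp(i⟨u, X_m⟩)] = exp(i ∑_{ℓ=1}^m u_ℓ μ(t_ℓ)) · φ(uᵀ Σ u) for all u ∈ ℝ^m, where Σ ∈ ℝ^{m×m} has entries Σ_{ℓ j} = γ(t_ℓ, t_j); that is, X_m has an elliptical distribution with location (μ(t₁), …, μ(t_m)), scatter matrix Σ and characteristic generator φ. -/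

import Mathlib

open MeasureTheory Matrix

/-!
Ellipticity is preserved by affine maps: pairing `b + A X` with `u` is pairing `X` with `Aᵀ u`, up
to the constant `⟨u, b⟩`, so the generator is unchanged and the scatter matrix `S` becomes
`A S Aᵀ`. The evaluation vector of a finite-rank process is the image of its scores `ξ` under the
affine map whose matrix has entries `φ_j(t_ℓ)`, and conjugating `diag(λ)` by this matrix gives the
matrix `(γ(t_ℓ, t_k))`.
-/

/-- The random vector `X` is elliptical with location `loc`, scatter matrix `S` and characteristic
generator `φ`, expressed through its characteristic function. The generator is a function on all of
`ℝ`, but only its values on the range of the quadratic form of `S` matter. -/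
def HasEllipticalCharFun {Ω ι : Type*} [MeasurableSpace Ω] [Fintype ι] (P : Measure Ω)
    (X : Ω → ι → ℝ) (loc : ι → ℝ) (S : Matrix ι ι ℝ) (φ : ℝ → ℂ) : Prop :=
  ∀ u : ι → ℝ, ∫ ω, Complex.exp (Complex.I * ((u ⬝ᵥ X ω : ℝ) : ℂ)) ∂P
    = Complex.exp (Complex.I * ((u ⬝ᵥ loc : ℝ) : ℂ)) * φ (u ⬝ᵥ S *ᵥ u)

/-- The value at `t` of the path `μ + ∑ j, x j • f j` of a finite-rank (Karhunen–Loève) process,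
where `x` is the realized vector of scores. -/
def finiteRankPath {T κ : Type*} [Fintype κ] (μ : T → ℝ) (f : κ → T → ℝ) (x : κ → ℝ) (t : T) : ℝ :=
  μ t + ∑ j, x j * f j t

/-- The kernel `γ(s, t) = ∑ j, λ_j φ_j(s) φ_j(t)` of a finite-rank process, which gives the scatter
of its evaluation vectors. -/
def finiteRankKernel {T κ : Type*} [Fintype κ] (lam : κ → ℝ) (f : κ → T → ℝ) (s t : T) : ℝ :=
  ∑ j, lam j * f j s * f j t

/-- The matrix `(φ_j(t_ℓ))` sending the scores of a finite-rank process to the centred values of its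
path at the points `t_ℓ`. -/
def evaluationMatrix {T ι κ : Type*} (f : κ → T → ℝ) (t : ι → T) : Matrix ι κ ℝ :=
  Matrix.of fun ℓ j => f j (t ℓ)

section Elliptical

variable {Ω ι κ : Type*} [MeasurableSpace Ω] [Fintype ι] [Fintype κ] {P : Measure Ω}
  {X : Ω → κ → ℝ} {φ : ℝ → ℂ}

theorem hasEllipticalCharFun_zero_diagonal_iff [DecidableEq κ] {lam : κ → ℝ} :
    HasEllipticalCharFun P X 0 (diagonal lam) φ ↔
      ∀ u : κ → ℝ, ∫ ω, Complex.exp (Complex.I * ((u ⬝ᵥ X ω : ℝ) : ℂ)) ∂P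
        = φ (∑ j, lam j * u j ^ 2) := by
  have quadForm_diagonal (u : κ → ℝ) : u ⬝ᵥ diagonal lam *ᵥ u = ∑ j, lam j * u j ^ 2 := by
    simp only [dotProduct, mulVec_diagonal]
    exact Finset.sum_congr rfl fun j _ => by ring
  simp [HasEllipticalCharFun, quadForm_diagonal]

theorem HasEllipticalCharFun.const_add_mulVec {loc : κ → ℝ} {S : Matrix κ κ ℝ}
    (hX : HasEllipticalCharFun P X loc S φ) (b : ι → ℝ) (A : Matrix ι κ ℝ) :
    HasEllipticalCharFun P (fun ω => b + A *ᵥ X ω) (b + A *ᵥ loc) (A * S * Aᵀ) φ := by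
  intro u
  have exp_affine (x : κ → ℝ) :
      Complex.exp (Complex.I * ((u ⬝ᵥ (b + A *ᵥ x) : ℝ) : ℂ)) =
        Complex.exp (Complex.I * ((u ⬝ᵥ b : ℝ) : ℂ)) *
          Complex.exp (Complex.I * (((u ᵥ* A) ⬝ᵥ x : ℝ) : ℂ)) := by
    rw [← Complex.exp_add, ← mul_add, ← Complex.ofReal_add, dotProduct_add, dotProduct_mulVec]
  have quadForm_conj : u ⬝ᵥ (A * S * Aᵀ) *ᵥ u = (u ᵥ* A) ⬝ᵥ S *ᵥ (u ᵥ* A) := by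
    rw [← mulVec_mulVec, ← mulVec_mulVec, mulVec_transpose, dotProduct_mulVec]
  simp only [exp_affine]
  rw [integral_const_mul, hX, quadForm_conj, mul_assoc]

end Elliptical

section FiniteRank

variable {T ι κ : Type*} [Fintype κ]

theorem finiteRankPath_comp (μ : T → ℝ) (f : κ → T → ℝ) (x : κ → ℝ) (t : ι → T) :
    finiteRankPath μ f x ∘ t = μ ∘ t + evaluationMatrix f t *ᵥ x := by
  ext ℓ
  simp [finiteRankPath, evaluationMatrix, mulVec, dotProduct, mul_comm]

theorem evaluationMatrix_mul_diagonal_mul_transpose [DecidableEq κ] (lam : κ → ℝ)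
    (f : κ → T → ℝ) (t : ι → T) :
    evaluationMatrix f t * diagonal lam * (evaluationMatrix f t)ᵀ =
      Matrix.of fun ℓ k => finiteRankKernel lam f (t ℓ) (t k) := by
  ext ℓ k
  rw [mul_apply]
  simp [mul_diagonal, evaluationMatrix, finiteRankKernel, mul_comm]

end FiniteRank

theorem evaluation_vector_elliptical_general {Ω T ι κ : Type*} [MeasurableSpace Ω] [Fintype ι]
    [Fintype κ] [DecidableEq κ] {P : Measure Ω} [IsFiniteMeasure P] {ξ : Ω → κ → ℝ}
    {lam : κ → ℝ} {φ : ℝ → ℂ} (hξ : HasEllipticalCharFun P ξ 0 (diagonal lam) φ)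
    (μ : T → ℝ) (f : κ → T → ℝ) (t : ι → T) :
    HasEllipticalCharFun P (fun ω => finiteRankPath μ f (ξ ω) ∘ t) (μ ∘ t)
      (Matrix.of fun ℓ k => finiteRankKernel lam f (t ℓ) (t k)) φ := by
  simpa only [finiteRankPath_comp, evaluationMatrix_mul_diagonal_mul_transpose, mulVec_zero,
    add_zero] using hξ.const_add_mulVec (μ ∘ t) (evaluationMatrix f t)

/-- Finite-rank elliptical process: the evaluation vector at points `t₁, …, t_m`
is elliptical with location `(μ(t₁), …, μ(t_m))`, scatter matrix `Σ` with entries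
`γ(t_ℓ, t_j)` and the same characteristic generator `φ`. -/
theorem evaluation_vector_elliptical
    {Ω : Type*} [MeasurableSpace Ω] (P : Measure Ω) [IsProbabilityMeasure P]
    (q m : ℕ) (I : Set ℝ) (μ : ℝ → ℝ) (φfun : Fin q → ℝ → ℝ)
    (lam : Fin q → ℝ)
    (hlam_mono : ∀ i j : Fin q, i ≤ j → lam j ≤ lam i)
    (hlam_pos : ∀ j, 0 < lam j)
    (ξ : Ω → Fin q → ℝ) (φ : ℝ → ℂ)
    (hchar : ∀ u : Fin q → ℝ,
      ∫ ω, Complex.exp (Complex.I * ((u ⬝ᵥ ξ ω : ℝ) : ℂ)) ∂P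
        = φ (∑ j, lam j * u j ^ 2))
    (t : Fin m → ℝ) (ht : ∀ ℓ, t ℓ ∈ I)
    (Sig : Matrix (Fin m) (Fin m) ℝ)
    (hSig : ∀ ℓ j', Sig ℓ j' = ∑ j, lam j * φfun j (t ℓ) * φfun j (t j')) :
    ∀ u : Fin m → ℝ,
      ∫ ω, Complex.exp (Complex.I *
          (((∑ ℓ, u ℓ * (μ (t ℓ) + ∑ j, ξ ω j * φfun j (t ℓ)) : ℝ)) : ℂ)) ∂P
        = Complex.exp (Complex.I * ((∑ ℓ, u ℓ * μ (t ℓ) : ℝ) : ℂ))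
            * φ (u ⬝ᵥ Sig.mulVec u) := by
  obtain rfl : Sig = Matrix.of fun ℓ k => finiteRankKernel lam φfun (t ℓ) (t k) := Matrix.ext hSig
  exact evaluation_vector_elliptical_general
    (hasEllipticalCharFun_zero_diagonal_iff.mpr hchar) μ φfun t
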